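/- CF = 𝔏(F₂)^w_{O(n)} = 𝔏(SL(2,ℤ))^w_{O(n)} = 𝔏(GL(2,ℤ))^w_{O(n)}: a language is context-free if and only if it is recognized by a weakly linear-time bounded F₂-automaton, if and only if it is recognized by a weakly linear-time bounded SL(2,ℤ)-automaton, if and only if it is recognized by a weakly linear-time bounded GL(2,ℤ)-automaton. -/

import Mathlib

/-- A `G`-automaton over input alphabet `α`: a nondeterministic finite automaton
equipped with a register holding an element of the group `G`. -/
structure GAutomaton (α : Type*) (G : Type*) [Group G] where
  /-- the (finite) state set -/
  Q : Type
  finQ : Finite Q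
  /-- the initial state -/
  q0 : Q
  /-- the accepting states -/
  acc : Set Q
  /-- the (finite) transition relation; `none` stands for ε -/
  δ : Set (Q × Option α × Q × G)
  finδ : δ.Finite

namespace GAutomaton

variable {α : Type*} {G : Type*} [Group G]

/-- One computation step between configurations `(state, register, remaining input)`. -/
def Step (M : GAutomaton α G) (c c' : M.Q × G × List α) : Prop :=
  ∃ σ m, (c.1, σ, c'.1, m) ∈ M.δ ∧ c'.2.1 = c.2.1 * m ∧
    match σ with
    | none => c'.2.2 = c.2.2
    | some s => c.2.2 = s :: c'.2.2

/-- `M.StepsIn k c c'` : configuration `c'` is reachable from `c` in exactly `k` steps. -/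
def StepsIn (M : GAutomaton α G) : ℕ → (M.Q × G × List α) → (M.Q × G × List α) → Prop
  | 0, c, c' => c = c'
  | n + 1, c, c' => ∃ d, M.Step c d ∧ M.StepsIn n d c'

/-- `M` accepts the word `w` within `t` computation steps. -/
def AcceptsIn (M : GAutomaton α G) (w : List α) (t : ℕ) : Prop :=
  ∃ k ≤ t, ∃ q ∈ M.acc, M.StepsIn k (M.q0, 1, w) (q, 1, [])

/-- The language recognized by `M`. -/
def lang (M : GAutomaton α G) : Language α := {w | ∃ t, M.AcceptsIn w t}

/-- `M` is real-time if every transition consumes an input symbol. -/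
def RealTime (M : GAutomaton α G) : Prop := ∀ tr ∈ M.δ, tr.2.1 ≠ none

end GAutomaton

/-- `L ∈ 𝔏(G)` : the language `L` is recognized by some `G`-automaton. -/
def GRecognizable (G : Type*) [Group G] {α : Type*} (L : Language α) : Prop :=
  ∃ M : GAutomaton α G, M.lang = L

/-- `L ∈ 𝔏(G)ʷ_{t(n)}` : `L` is recognized by a weakly `t(n)` time-bounded `G`-automaton. -/
def GRecognizableInTime (G : Type*) [Group G] {α : Type*} (L : Language α) (t : ℕ → ℕ) : Prop :=
  ∃ M : GAutomaton α G, M.lang = L ∧ ∀ w ∈ L, M.AcceptsIn w (t w.length)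

/-- `L ∈ 𝔏(G)ʷ_{O(n)}` : `L` is recognized by a weakly linear-time bounded `G`-automaton. -/
def GRecognizableLinTime (G : Type*) [Group G] {α : Type*} (L : Language α) : Prop :=
  ∃ C : ℕ, GRecognizableInTime G L (fun n => C * n + C)

/-! ### Computations of `G`-automata -/

namespace GAutomaton

variable {α : Type*} {G H : Type*} [Group G] [Group H]

theorem StepsIn.trans {M : GAutomaton α G} {m n : ℕ} {c d e : M.Q × G × List α}
    (hcd : M.StepsIn m c d) (hde : M.StepsIn n d e) : M.StepsIn (m + n) c e := by
  induction m generalizing c with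
  | zero =>
    obtain rfl : c = d := hcd
    simpa using hde
  | succ m ih =>
    obtain ⟨c', hc, h⟩ := hcd
    rw [Nat.add_right_comm]
    exact ⟨c', hc, ih h⟩

theorem StepsIn.single {M : GAutomaton α G} {c d : M.Q × G × List α} (h : M.Step c d) :
    M.StepsIn 1 c d :=
  ⟨d, h, rfl⟩

/-- A computation can be translated in the register and continued by further input. -/
theorem Step.frame {M : GAutomaton α G} {p q : M.Q} {x y : G} {u v : List α}
    (h : M.Step (p, x, u) (q, y, v)) (g : G) (w : List α) :
    M.Step (p, g * x, u ++ w) (q, g * y, v ++ w) := by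
  obtain ⟨σ, m, hδ, hm, hσ⟩ := h
  refine ⟨σ, m, hδ, ?_, ?_⟩
  · simp only at hm ⊢
    rw [hm, mul_assoc]
  · cases σ <;> simp_all

theorem StepsIn.frame {M : GAutomaton α G} {n : ℕ} {p q : M.Q} {x y : G} {u v : List α}
    (h : M.StepsIn n (p, x, u) (q, y, v)) (g : G) (w : List α) :
    M.StepsIn n (p, g * x, u ++ w) (q, g * y, v ++ w) := by
  induction n generalizing p x u with
  | zero =>
    obtain ⟨rfl, rfl, rfl⟩ : p = q ∧ x = y ∧ u = v := by simpa [StepsIn] using h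
    rfl
  | succ n ih =>
    obtain ⟨⟨p', x', u'⟩, hs, h⟩ := h
    exact ⟨_, hs.frame g w, ih h⟩

/-- The automaton obtained by applying a group homomorphism to all the register updates. -/
def map (f : G →* H) (M : GAutomaton α G) : GAutomaton α H where
  Q := M.Q
  finQ := M.finQ
  q0 := M.q0
  acc := M.acc
  δ := (fun t => (t.1, t.2.1, t.2.2.1, f t.2.2.2)) '' M.δ
  finδ := M.finδ.image _

theorem StepsIn.map {M : GAutomaton α G} (f : G →* H) {n : ℕ} {p q : M.Q} {x y : G}
    {u v : List α} (h : M.StepsIn n (p, x, u) (q, y, v)) :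
    (M.map f).StepsIn n (p, f x, u) (q, f y, v) := by
  induction n generalizing p x u with
  | zero =>
    obtain ⟨rfl, rfl, rfl⟩ : p = q ∧ x = y ∧ u = v := by simpa [StepsIn] using h
    rfl
  | succ n ih =>
    obtain ⟨⟨p', x', u'⟩, ⟨σ, m, hδ, hm, hσ⟩, h⟩ := h
    refine ⟨(p', f x', u'), ⟨σ, f m, ⟨_, hδ, rfl⟩, ?_, hσ⟩, ih h⟩
    simp only at hm
    simp [hm]

theorem StepsIn.exists_of_map {M : GAutomaton α G} {f : G →* H} {n : ℕ} {p q : M.Q} {x : G}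
    {z : H} {u v : List α} (h : (M.map f).StepsIn n (p, f x, u) (q, z, v)) :
    ∃ y, f y = z ∧ M.StepsIn n (p, x, u) (q, y, v) := by
  induction n generalizing p x u with
  | zero =>
    cases h
    exact ⟨x, rfl, rfl⟩
  | succ n ih =>
    obtain ⟨⟨p', x', u'⟩, ⟨σ, m, ⟨⟨p₁, σ₁, q₁, m₁⟩, hδ, he⟩, hm, hσ⟩, h⟩ := h
    cases he
    obtain rfl : x' = f (x * m₁) := by simpa using hm
    obtain ⟨y, hy, h⟩ := ih h
    exact ⟨y, hy, _, ⟨_, m₁, hδ, rfl, hσ⟩, h⟩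

theorem acceptsIn_map {M : GAutomaton α G} {f : G →* H} (hf : Function.Injective f)
    {w : List α} {t : ℕ} : (M.map f).AcceptsIn w t ↔ M.AcceptsIn w t := by
  constructor
  · rintro ⟨k, hk, q, hq, h⟩
    rw [← f.map_one] at h
    obtain ⟨y, hy, h⟩ := h.exists_of_map
    rw [f.map_one, map_eq_one_iff f hf] at hy
    exact ⟨k, hk, q, hq, hy ▸ h⟩
  · rintro ⟨k, hk, q, hq, h⟩
    have := h.map f
    rw [f.map_one] at this
    exact ⟨k, hk, q, hq, this⟩

theorem lang_map {M : GAutomaton α G} {f : G →* H} (hf : Function.Injective f) :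
    (M.map f).lang = M.lang :=
  Set.ext fun _ => exists_congr fun _ => acceptsIn_map hf

end GAutomaton

theorem GRecognizableLinTime.of_injective {α G H : Type*} [Group G] [Group H] {L : Language α}
    (f : G →* H) (hf : Function.Injective f) (hL : GRecognizableLinTime G L) :
    GRecognizableLinTime H L := by
  obtain ⟨C, M, hM, ht⟩ := hL
  exact ⟨C, M.map f, by rw [GAutomaton.lang_map hf, hM],
    fun w hw => (GAutomaton.acceptsIn_map hf).2 (ht w hw)⟩

theorem GRecognizableLinTime.recognizable {α G : Type*} [Group G] {L : Language α}
    (hL : GRecognizableLinTime G L) : GRecognizable G L :=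
  let ⟨_, M, hM, _⟩ := hL
  ⟨M, hM⟩

/-! ### Interpreting the nonterminals of a grammar by languages -/

namespace ContextFreeGrammar

variable {T : Type*} {N : Type*}

/-- The interpretation of a symbol, given an interpretation of the nonterminals. -/
def symbolLang (val : N → Language T) : Symbol T N → Language T
  | .terminal a => {[a]}
  | .nonterminal n => val n

/-- The interpretation of a sentential form, given an interpretation of the nonterminals. -/
def formLang (val : N → Language T) (u : List (Symbol T N)) : Language T :=
  (u.map (symbolLang val)).prod

theorem mem_formLang_nil {val : N → Language T} {w : List T} :
    w ∈ formLang val [] ↔ w = [] :=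
  Iff.rfl

theorem mem_formLang_cons {val : N → Language T} {x : Symbol T N} {u : List (Symbol T N)}
    {w : List T} : w ∈ formLang val (x :: u) ↔
      ∃ a ∈ symbolLang val x, ∃ b ∈ formLang val u, a ++ b = w := by
  simp [formLang, Language.mem_mul]

theorem formLang_append (val : N → Language T) (u v : List (Symbol T N)) :
    formLang val (u ++ v) = formLang val u * formLang val v := by
  simp [formLang]

theorem mem_formLang_terminals (val : N → Language T) (w : List T) :
    w ∈ formLang val (w.map Symbol.terminal) := by
  induction w with
  | nil => exact mem_formLang_nil.2 rfl
  | cons a w ih => exact mem_formLang_cons.2 ⟨[a], rfl, w, ih, rfl⟩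

/-- An interpretation of the nonterminals that is closed under the rules
is an upper bound of the languages they generate. -/
theorem mem_formLang_of_derives {g : ContextFreeGrammar T} {val : g.NT → Language T}
    (hval : ∀ r ∈ g.rules, formLang val r.output ≤ val r.input)
    {u : List (Symbol T g.NT)} {w : List T} (h : g.Derives u (w.map Symbol.terminal)) :
    w ∈ formLang val u := by
  induction h using Relation.ReflTransGen.head_induction_on with
  | refl => exact mem_formLang_terminals val w
  | head hp _ ih =>
    obtain ⟨r, hr, hrw⟩ := hp
    obtain ⟨p, q, rfl, rfl⟩ := hrw.exists_parts
    have hle : formLang val (p ++ r.output ++ q) ≤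
        formLang val (p ++ [Symbol.nonterminal r.input] ++ q) := by
      simp only [formLang_append]
      gcongr
      simpa [formLang, symbolLang] using hval r hr
    exact hle ih

theorem mem_val_of_derives {g : ContextFreeGrammar T} {val : g.NT → Language T}
    (hval : ∀ r ∈ g.rules, formLang val r.output ≤ val r.input)
    {n : g.NT} {w : List T} (h : g.Derives [.nonterminal n] (w.map Symbol.terminal)) :
    w ∈ val n := by
  simpa [formLang, symbolLang] using mem_formLang_of_derives hval h

theorem derives_of_mem_rules {g : ContextFreeGrammar T} {r : ContextFreeRule T g.NT}
    (hr : r ∈ g.rules) : g.Derives [.nonterminal r.input] r.output :=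
  Produces.single ⟨r, hr, .input_output⟩

theorem Derives.append {g : ContextFreeGrammar T} {u u' v v' : List (Symbol T g.NT)}
    (hu : g.Derives u u') (hv : g.Derives v v') : g.Derives (u ++ v) (u' ++ v') :=
  (hu.append_right v).trans (hv.append_left u')

end ContextFreeGrammar

/-! ### Free groups of countable rank inside the free group of rank two -/

namespace FreeGroup

/-- The shift automorphism of the free group with basis `ℤ`, as an action of `ℤ`. -/
def shift : Multiplicative ℤ →* MulAut (FreeGroup ℤ) :=
  zpowersHom (MulAut (FreeGroup ℤ)) (freeGroupCongr (Equiv.addRight 1))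

theorem shift_apply_of_zero (n : ℤ) : shift (Multiplicative.ofAdd n) (of 0) = of n := by
  have h (m : ℤ) : (freeGroupCongr (Equiv.addRight (1 : ℤ)) : MulAut (FreeGroup ℤ)) (of m) =
      of (m + 1) := by simp [freeGroupCongr]
  have h' (m : ℤ) : (freeGroupCongr (Equiv.addRight (1 : ℤ)) : MulAut (FreeGroup ℤ))⁻¹ (of m) =
      of (m - 1) := by
    rw [MulAut.inv_def, MulEquiv.symm_apply_eq, h, sub_add_cancel]
  simp only [shift, zpowersHom_apply, toAdd_ofAdd]
  induction n with
  | zero => simp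
  | succ n ih => rw [add_comm, zpow_add, zpow_one, MulAut.mul_apply, ih, h, add_comm]
  | pred n ih => rw [sub_eq_neg_add, zpow_add, zpow_neg_one, MulAut.mul_apply, ih, h',
      sub_eq_neg_add]

/-- The conjugates `aⁿ b a⁻ⁿ` freely generate a subgroup of the free group on `a` and `b`: the
free group on `a` and `b` maps onto `FreeGroup ℤ ⋊ ℤ` in such a way that `aⁿ b a⁻ⁿ` goes to the
`n`-th basis element. -/
theorem lift_conj_injective :
    Function.Injective (lift fun n : ℤ => of (0 : Fin 2) ^ n * of 1 * (of 0 ^ n)⁻¹) := by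
  let ψ : FreeGroup (Fin 2) →* FreeGroup ℤ ⋊[shift] Multiplicative ℤ :=
    lift ![SemidirectProduct.inr (Multiplicative.ofAdd 1), SemidirectProduct.inl (of 0)]
  have hψ : ψ.comp (lift fun n : ℤ => of (0 : Fin 2) ^ n * of 1 * (of 0 ^ n)⁻¹) =
      SemidirectProduct.inl := by
    ext1 n
    have : (SemidirectProduct.inr (Multiplicative.ofAdd 1) :
        FreeGroup ℤ ⋊[shift] Multiplicative ℤ) ^ n =
          SemidirectProduct.inr (Multiplicative.ofAdd n) := by
      rw [← map_zpow, ← ofAdd_zsmul]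
      simp
    simp only [MonoidHom.comp_apply, lift_apply_of, _root_.map_mul, _root_.map_inv, map_zpow, ψ,
      Matrix.cons_val_zero, Matrix.cons_val_one, this]
    rw [← _root_.map_inv, ← SemidirectProduct.inl_aut, shift_apply_of_zero]
  have hinj : Function.Injective (ψ.comp _) := hψ ▸ SemidirectProduct.inl_injective
  exact Function.Injective.of_comp hinj

theorem exists_injective_hom_freeGroup_fin_two (X : Type*) [Countable X] :
    ∃ f : FreeGroup X →* FreeGroup (Fin 2), Function.Injective f := by
  obtain ⟨e, he⟩ := Countable.exists_injective_nat X
  exact ⟨(lift _).comp (map fun x => (e x : ℤ)), lift_conj_injective.comp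
    (map_injective (Int.ofNat_injective.comp he))⟩

/-! ### Left multiplication by a letter, on reduced words -/

variable {X : Type*} [DecidableEq X]

theorem toWord_mk_cons_mul (a : X × Bool) (g : FreeGroup X) :
    (mk [a] * g).toWord = a :: g.toWord ∨ g.toWord = (a.1, !a.2) :: (mk [a] * g).toWord := by
  have h : (mk [a] * g).toWord = reduce (a :: g.toWord) := by
    rw [toWord_mul, toWord_mk, reduce_singleton, List.singleton_append]
  rw [h, reduce.cons, reduce_toWord]
  rcases hg : g.toWord with _ | ⟨b, l⟩
  · simp
  · by_cases hab : a.1 = b.1 ∧ a.2 = !b.2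
    · right
      simp [hab]
    · left
      simp [hab]

theorem toWord_mk_cons_mul_of_eq_cons {a : X × Bool} {g : FreeGroup X} {l : List (X × Bool)}
    (h : g.toWord = (a.1, !a.2) :: l) : (mk [a] * g).toWord = l := by
  rw [toWord_mul, toWord_mk, reduce_singleton, List.singleton_append, reduce.cons, reduce_toWord, h]
  simp

theorem toWord_mk_cons_mul_of_ne {a : X × Bool} {g : FreeGroup X}
    (h : ∀ l, g.toWord ≠ (a.1, !a.2) :: l) : (mk [a] * g).toWord = a :: g.toWord :=
  (toWord_mk_cons_mul a g).resolve_right (h _)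

theorem toWord_inv_mul_of {t : X} {g : FreeGroup X} (h : ∀ l, g⁻¹.toWord ≠ (t, true) :: l) :
    (g * of t)⁻¹.toWord = (t, false) :: g⁻¹.toWord := by
  rw [mul_inv_rev]
  exact toWord_mk_cons_mul_of_ne (a := (t, false)) h

theorem toWord_inv_mul_of_inv {t : X} {g : FreeGroup X} (h : ∀ l, g⁻¹.toWord ≠ (t, false) :: l) :
    (g * (of t)⁻¹)⁻¹.toWord = (t, true) :: g⁻¹.toWord := by
  rw [mul_inv_rev, inv_inv]
  exact toWord_mk_cons_mul_of_ne (a := (t, true)) h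

theorem toWord_inv_mul_of_inv_of_eq_cons {t : X} {g : FreeGroup X} {l : List (X × Bool)}
    (h : g⁻¹.toWord = (t, false) :: l) : (g * (of t)⁻¹)⁻¹.toWord = l := by
  rw [mul_inv_rev, inv_inv]
  exact toWord_mk_cons_mul_of_eq_cons (a := (t, true)) h

end FreeGroup

/-! ### Context-free languages are recognized in linear time over a free group -/

namespace ContextFreeGrammar

variable {α : Type} (g : ContextFreeGrammar α)

/-- The states of the recursive-descent automaton of a grammar: what is left to be parsed of the
right-hand side of a (possibly shortened) rule. -/
def forms : Set (List (Symbol α g.NT)) :=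
  {s | s = [.nonterminal g.initial] ∨ s = [] ∨ ∃ r ∈ g.rules, s.Sublist r.output}

variable {g}

theorem forms_finite : g.forms.Finite := by
  have h : g.forms = {[.nonterminal g.initial]} ∪ ({[]} ∪
      ⋃ r ∈ g.rules, {s | s ∈ r.output.sublists}) := by
    ext s
    simp only [forms, Set.mem_ofPred_eq, Set.mem_union, Set.mem_singleton_iff, Set.mem_iUnion,
      List.mem_sublists, exists_prop]
  rw [h]
  exact (Set.finite_singleton _).union ((Set.finite_singleton _).union
    (g.rules.finite_toSet.biUnion fun r _ => List.finite_toSet _))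

theorem nil_mem_forms : [] ∈ g.forms :=
  .inr (.inl rfl)

theorem initial_mem_forms : [.nonterminal g.initial] ∈ g.forms :=
  .inl rfl

theorem mem_forms_of_cons {x : Symbol α g.NT} {s : List (Symbol α g.NT)}
    (h : x :: s ∈ g.forms) : s ∈ g.forms := by
  rcases h with h | h | ⟨r, hr, h⟩
  · obtain ⟨-, rfl⟩ := List.cons.inj h
    exact nil_mem_forms
  · cases h
  · exact .inr (.inr ⟨r, hr, (List.sublist_cons_self x s).trans h⟩)

/-- The relation between the components of the transitions of the recursive-descent automaton:
read a terminal; call a nonterminal, pushing the form to be returned to; return to a form,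
popping it. -/
inductive Descends : g.forms → Option α → g.forms → FreeGroup g.forms → Prop
  | read (a : α) (s t : g.forms) (h : s.1 = .terminal a :: t.1) : Descends s (some a) t 1
  | call (n : g.NT) (s t r : g.forms) (h : s.1 = .nonterminal n :: r.1)
      (ht : g.Derives [.nonterminal n] t.1) : Descends s none t (.of r)
  | ret (s t : g.forms) (h : s.1 = []) : Descends s none t (.of t)⁻¹

variable (g) in
/-- The recursive-descent automaton of a grammar, storing return addresses in a free group. -/
def descent [Finite α] : GAutomaton α (FreeGroup g.forms) where
  Q := g.forms
  finQ := forms_finite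
  q0 := ⟨_, initial_mem_forms⟩
  acc := {⟨[], nil_mem_forms⟩}
  δ := {t | Descends t.1 t.2.1 t.2.2.1 t.2.2.2}
  finδ := by
    have : Finite g.forms := forms_finite
    refine (Set.toFinite (Set.univ ×ˢ Set.univ ×ˢ Set.univ ×ˢ
      ({1} ∪ Set.range FreeGroup.of ∪ Set.range fun t => (FreeGroup.of t)⁻¹))).subset ?_
    rintro ⟨s, σ, t, m⟩ h
    simp only [Set.mem_ofPred_eq] at h
    cases h <;> simp

/-! #### Soundness -/

/-- The length of the form that is going to be parsed just before the bottom of the stack `v`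
is removed, if the current form has length `n`. -/
def bottomLength : ℕ → List g.forms → ℕ
  | n, [] => n
  | _, t :: v => bottomLength (t.1.length + 1) v

theorem bottomLength_le_succ (n : ℕ) (v : List g.forms) :
    bottomLength n v ≤ bottomLength (n + 1) v := by
  cases v with
  | nil => exact Nat.le_succ n
  | cons t v => exact le_rfl

open Classical in
/-- If a return address is popped although it is not on top of the stack, then its inverse stays
in the reduced word of the register, since from then on only shorter forms
can be pushed right on top of it. -/
theorem not_stepsIn_descent_of_blocked [Finite α] {k : ℕ} {s : g.forms}
    {x : FreeGroup g.forms} {w : List α} {v : List g.forms} {t : g.forms}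
    {l : List (g.forms × Bool)} (hx : x⁻¹.toWord = v.map (·, false) ++ (t, true) :: l)
    (hv : bottomLength s.1.length v ≤ t.1.length) {q : g.forms} :
    ¬ g.descent.StepsIn k (s, x, w) (q, 1, []) := by
  induction k generalizing s x w v t l with
  | zero =>
    intro h
    cases h
    simp at hx
  | succ k ih =>
    rintro ⟨⟨(s' : g.forms), x', w'⟩, ⟨σ, m, hd, rfl : x' = x * m, -⟩, h⟩
    change Descends s σ s' m at hd
    cases hd with
    | read a _ _ hs =>
      rw [mul_one] at h
      refine ih hx (le_trans ?_ hv) h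
      rw [hs]
      exact bottomLength_le_succ _ v
    | call n _ _ r hs ht =>
      refine ih (v := r :: v) (t := t) (l := l) ?_ ?_ h
      · rw [FreeGroup.toWord_inv_mul_of, hx]
        · rfl
        · rw [hx]
          intro l' hl
          cases v with
          | nil =>
            obtain rfl : t = r := by simpa using congrArg (fun z => z.head?) hl
            simp [bottomLength, hs] at hv
          | cons => simp at hl
      · rw [hs] at hv
        exact hv
    | ret _ _ hs =>
      by_cases hpop : ∃ v', v = s' :: v'
      · obtain ⟨v', rfl⟩ := hpop
        refine ih (v := v') (t := t) (l := l) ?_ ?_ h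
        · exact FreeGroup.toWord_inv_mul_of_inv_of_eq_cons hx
        · exact (bottomLength_le_succ _ v').trans hv
      · refine ih (v := []) (t := s') (l := x⁻¹.toWord) ?_ le_rfl h
        rw [FreeGroup.toWord_inv_mul_of_inv]
        · rfl
        · rw [hx]
          intro l' hl
          cases v with
          | nil => simp at hl
          | cons r v =>
            obtain rfl : r = s' := by simpa using congrArg (fun z => z.head?) hl
            exact hpop ⟨v, rfl⟩

open Classical in
theorem derives_of_stepsIn_descent [Finite α] {k : ℕ} {s : g.forms}
    {x : FreeGroup g.forms} {w : List α} {v : List g.forms}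
    (hx : x⁻¹.toWord = v.map (·, false))
    (h : g.descent.StepsIn k (s, x, w) (⟨[], nil_mem_forms⟩, 1, [])) :
    g.Derives (s.1 ++ (v.map Subtype.val).flatten) (w.map Symbol.terminal) := by
  induction k generalizing s x w v with
  | zero =>
    cases h
    obtain rfl : v = [] := by simpa using hx.symm
    exact Derives.refl _
  | succ k ih =>
    obtain ⟨⟨(s' : g.forms), x', w'⟩, ⟨σ, m, hd, rfl : x' = x * m, hw⟩, h⟩ := h
    change Descends s σ s' m at hd
    cases hd with
    | read a _ _ hs =>
      obtain rfl : w = a :: w' := hw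
      rw [mul_one] at h
      rw [hs]
      exact (ih hx h).append_left [.terminal a]
    | call n _ _ r hs ht =>
      obtain rfl : w' = w := hw
      have hder := ih (v := r :: v) (by
        rw [FreeGroup.toWord_inv_mul_of, hx]
        · rfl
        · rw [hx]
          intro l' hl
          cases v <;> simp at hl) h
      rw [hs, List.cons_append, ← List.singleton_append]
      exact (ht.append_right _).trans (by simpa using hder)
    | ret _ _ hs =>
      obtain rfl : w' = w := hw
      by_cases hpop : ∃ v', v = s' :: v'
      · obtain ⟨v', rfl⟩ := hpop
        simpa [hs] using ih (FreeGroup.toWord_inv_mul_of_inv_of_eq_cons hx) h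
      · refine (not_stepsIn_descent_of_blocked (v := []) (t := s') (l := x⁻¹.toWord) ?_
          le_rfl h).elim
        rw [FreeGroup.toWord_inv_mul_of_inv]
        · rfl
        · rw [hx]
          intro l' hl
          cases v with
          | nil => simp at hl
          | cons r v =>
            obtain rfl : r = s' := by simpa using congrArg (fun z => z.head?) hl
            exact hpop ⟨v, rfl⟩

/-! #### Completeness in linear time -/

/-- `Parses s w n` : the recursive-descent automaton can read `w` while parsing the form `s`
within `n` steps. -/
inductive Parses : List (Symbol α g.NT) → List α → ℕ → Prop
  | nil : Parses [] [] 0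
  | terminal (a : α) {s : List (Symbol α g.NT)} {w : List α} {n : ℕ} (h : Parses s w n) :
      Parses (.terminal a :: s) (a :: w) (n + 1)
  | nonterminal (A : g.NT) {s t : List (Symbol α g.NT)} {u w : List α} {m n : ℕ}
      (ht : t ∈ g.forms) (hA : g.Derives [.nonterminal A] t) (hu : Parses t u m)
      (hw : Parses s w n) : Parses (.nonterminal A :: s) (u ++ w) (m + n + 2)

theorem Parses.stepsIn [Finite α] {s : List (Symbol α g.NT)} {w : List α} {n : ℕ}
    (h : Parses s w n) (hs : s ∈ g.forms) (x : FreeGroup g.forms) (w' : List α) :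
    g.descent.StepsIn n (⟨s, hs⟩, x, w ++ w') (⟨[], nil_mem_forms⟩, x, w') := by
  induction h generalizing x w' with
  | nil => rfl
  | terminal a h ih =>
    exact ⟨(⟨_, mem_forms_of_cons hs⟩, x, _),
      ⟨some a, 1, .read a ⟨_, hs⟩ ⟨_, mem_forms_of_cons hs⟩ rfl, (mul_one x).symm, rfl⟩,
      ih _ x w'⟩
  | @nonterminal A s t u w m n ht hA hu hw ihu ihw =>
    let r : g.forms := ⟨s, mem_forms_of_cons hs⟩
    have hcall : g.descent.Step (⟨_, hs⟩, x, (u ++ w) ++ w')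
        (⟨t, ht⟩, x * .of r, u ++ (w ++ w')) :=
      ⟨none, _, .call A ⟨_, hs⟩ ⟨t, ht⟩ r rfl hA, rfl, (List.append_assoc u w w').symm⟩
    have hret : g.descent.Step (⟨[], nil_mem_forms⟩, x * .of r, w ++ w') (r, x, w ++ w') :=
      ⟨none, _, .ret ⟨_, nil_mem_forms⟩ r rfl, (mul_inv_cancel_right x _).symm, rfl⟩
    have := (GAutomaton.StepsIn.single hcall).trans
      ((ihu ht _ _).trans ((GAutomaton.StepsIn.single hret).trans (ihw _ x w')))
    convert this using 1
    omega

variable (g) in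
/-- The words derivable from a nonterminal that the recursive-descent automaton can read fast. -/
def fastLang (A : g.NT) : Language α :=
  {w | g.Derives [.nonterminal A] (w.map .terminal) ∧ (w ≠ [] →
    ∃ s ∈ g.forms, g.Derives [.nonterminal A] s ∧ ∃ n, Parses s w n ∧ n + 4 ≤ 5 * w.length)}

theorem derives_of_mem_formLang_fastLang {u : List (Symbol α g.NT)} {w : List α}
    (h : w ∈ formLang g.fastLang u) : g.Derives u (w.map .terminal) := by
  induction u generalizing w with
  | nil =>
    obtain rfl := mem_formLang_nil.1 h
    exact Derives.refl _
  | cons x u ih =>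
    obtain ⟨a, ha, b, hb, rfl⟩ := mem_formLang_cons.1 h
    rw [List.map_append, ← List.singleton_append]
    refine Derives.append ?_ (ih hb)
    cases x with
    | terminal c =>
      obtain rfl : a = [c] := ha
      exact Derives.refl _
    | nonterminal A => exact ha.1

variable (g) in
/-- The nonempty words in `fastLang`. -/
def fastLangNonempty (A : g.NT) : Language α :=
  {w | w ∈ g.fastLang A ∧ w ≠ []}

/-- The symbols parsed by the empty word can be erased. -/
theorem exists_sublist_mem_formLang {u : List (Symbol α g.NT)} {w : List α}
    (h : w ∈ formLang g.fastLang u) :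
    ∃ s, s.Sublist u ∧ g.Derives u s ∧ w ∈ formLang g.fastLangNonempty s := by
  induction u generalizing w with
  | nil => exact ⟨[], .refl _, .refl _, h⟩
  | cons x u ih =>
    obtain ⟨a, ha, b, hb, rfl⟩ := mem_formLang_cons.1 h
    obtain ⟨s, hsu, hs, hbs⟩ := ih hb
    cases x with
    | terminal c =>
      exact ⟨_, hsu.cons_cons _, hs.append_left [_], mem_formLang_cons.2 ⟨a, ha, b, hbs, rfl⟩⟩
    | nonterminal A =>
      by_cases ha' : a = []
      · subst ha'
        exact ⟨s, hsu.cons _, Derives.append (u := [_]) ha.1 hs, hbs⟩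
      · exact ⟨_, hsu.cons_cons _, hs.append_left [_],
          mem_formLang_cons.2 ⟨a, ⟨ha, ha'⟩, b, hbs, rfl⟩⟩

theorem exists_parses_of_mem_formLang {s : List (Symbol α g.NT)} {w : List α}
    (h : w ∈ formLang g.fastLangNonempty s) :
    ∃ n, Parses s w n ∧ n + 2 * s.length ≤ 5 * w.length := by
  induction s generalizing w with
  | nil =>
    obtain rfl := mem_formLang_nil.1 h
    exact ⟨0, .nil, le_rfl⟩
  | cons x s ih =>
    obtain ⟨a, ha, b, hb, rfl⟩ := mem_formLang_cons.1 h
    obtain ⟨n, hn, hle⟩ := ih hb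
    cases x with
    | terminal c =>
      obtain rfl : a = [c] := ha
      refine ⟨n + 1, .terminal c hn, ?_⟩
      simp only [List.length_cons, List.length_append, List.length_nil]
      omega
    | nonterminal A =>
      obtain ⟨t, ht, hA, m, hm, hle'⟩ := ha.1.2 ha.2
      refine ⟨m + n + 2, .nonterminal A ht hA hm hn, ?_⟩
      simp only [List.length_cons, List.length_append]
      omega

theorem formLang_fastLang_le {r : ContextFreeRule α g.NT} (hr : r ∈ g.rules) :
    formLang g.fastLang r.output ≤ g.fastLang r.input := by
  intro w hw
  refine ⟨(derives_of_mem_rules hr).trans (derives_of_mem_formLang_fastLang hw), fun hne => ?_⟩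
  obtain ⟨s, hsub, hs, hws⟩ := exists_sublist_mem_formLang hw
  have hforms : s ∈ g.forms := .inr (.inr ⟨r, hr, hsub⟩)
  have hA := (derives_of_mem_rules hr).trans hs
  obtain ⟨n, hn, hle⟩ := exists_parses_of_mem_formLang hws
  match s, hws with
  | [], hws => exact (hne (mem_formLang_nil.1 hws)).elim
  | [.terminal a], hws =>
    obtain ⟨_, rfl, _, rfl, rfl⟩ := mem_formLang_cons.1 hws
    exact ⟨_, hforms, hA, 1, .terminal a .nil, by simp⟩
  | [.nonterminal B], hws =>
    obtain ⟨u, hu, _, rfl, rfl⟩ := mem_formLang_cons.1 hws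
    obtain ⟨t, ht, hB, hm⟩ := hu.1.2 hu.2
    exact ⟨t, ht, hA.trans hB, by simpa using hm⟩
  | _ :: _ :: _, hws =>
    refine ⟨_, hforms, hA, n, hn, ?_⟩
    simp only [List.length_cons] at hle
    omega

theorem acceptsIn_descent [Finite α] {w : List α} (hw : w ∈ g.language) :
    g.descent.AcceptsIn w (5 * w.length + 5) := by
  have hfast := mem_val_of_derives (val := g.fastLang) (fun _ hr => formLang_fastLang_le hr) hw
  obtain ⟨n, hn, hle⟩ :
      ∃ n, Parses [.nonterminal g.initial] w n ∧ n ≤ 5 * w.length + 5 := by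
    by_cases hne : w = []
    · subst hne
      exact ⟨2, .nonterminal _ (u := []) nil_mem_forms hw .nil .nil, by simp⟩
    · obtain ⟨s, hs, hder, n, hn, hle⟩ := hfast.2 hne
      exact ⟨n + 2, by simpa using Parses.nonterminal _ hs hder hn .nil, by omega⟩
  refine ⟨n, hle, _, rfl, ?_⟩
  have := hn.stepsIn initial_mem_forms 1 []
  rwa [List.append_nil] at this

theorem lang_descent [Finite α] : g.descent.lang = g.language := by
  ext w
  constructor
  · rintro ⟨t, k, -, q, rfl, h⟩
    simpa using derives_of_stepsIn_descent (s := ⟨_, initial_mem_forms⟩) (v := []) (by simp) h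
  · exact fun hw => ⟨_, acceptsIn_descent hw⟩

end ContextFreeGrammar

theorem Language.IsContextFree.gRecognizableLinTime {α : Type} [Finite α] {L : Language α}
    (hL : L.IsContextFree) : GRecognizableLinTime (FreeGroup (Fin 2)) L := by
  obtain ⟨g, rfl⟩ := hL
  have : Finite g.forms := ContextFreeGrammar.forms_finite
  obtain ⟨f, hf⟩ := FreeGroup.exists_injective_hom_freeGroup_fin_two g.forms
  exact GRecognizableLinTime.of_injective f hf
    ⟨5, g.descent, ContextFreeGrammar.lang_descent,
      fun _ hw => ContextFreeGrammar.acceptsIn_descent hw⟩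

/-! ### Triangulating paths in free groups -/

namespace FreeGroup

variable {X : Type*} [DecidableEq X]

theorem exists_common_suffix_mk_mul (L : List (X × Bool)) (g : FreeGroup X) :
    ∃ u v p, g.toWord = u ++ p ∧ (mk L * g).toWord = v ++ p ∧
      u.length + v.length ≤ L.length := by
  induction L with
  | nil => exact ⟨[], [], g.toWord, rfl, by rw [← one_eq_mk, one_mul]; rfl, le_rfl⟩
  | cons a L ih =>
    obtain ⟨u, v, p, hg, hL, hle⟩ := ih
    have hmk : mk (a :: L) * g = mk [a] * (mk L * g) := by
      rw [← mul_assoc, mul_mk, List.singleton_append]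
    rw [hmk]
    rcases toWord_mk_cons_mul a (mk L * g) with h | h
    · refine ⟨u, a :: v, p, hg, by rw [h, hL, List.cons_append], ?_⟩
      simp only [List.length_cons]
      omega
    · rw [hL] at h
      cases v with
      | nil =>
        refine ⟨u ++ [(a.1, !a.2)], [], _, ?_, rfl, ?_⟩
        · rw [hg, ← List.nil_append p, h, List.append_assoc]
          rfl
        · simpa using hle
      | cons b v =>
        refine ⟨u, v, p, hg, (List.cons.inj h).2.symm, ?_⟩
        simp only [List.length_cons] at hle ⊢
        omega

theorem exists_common_suffix (g h : FreeGroup X) :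
    ∃ u v p, g.toWord = u ++ p ∧ h.toWord = v ++ p ∧
      u.length + v.length ≤ (g * h⁻¹).norm := by
  obtain ⟨u, v, p, hg, hh, hle⟩ := exists_common_suffix_mk_mul (h * g⁻¹).toWord g
  rw [mk_toWord, inv_mul_cancel_right] at hh
  refine ⟨u, v, p, hg, hh, hle.trans_eq ?_⟩
  change (h * g⁻¹).norm = _
  rw [← norm_inv_eq, mul_inv_rev, inv_inv]

theorem norm_mul_inv_le_of_common_suffix {g h : FreeGroup X} {u v p : List (X × Bool)}
    (hg : g.toWord = u ++ p) (hh : h.toWord = v ++ p) :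
    (g * h⁻¹).norm ≤ u.length + v.length := by
  have heq : g * h⁻¹ = mk u * (mk v)⁻¹ := by
    rw [← mk_toWord (x := g), ← mk_toWord (x := h), hg, hh, ← mul_mk, ← mul_mk]
    group
  rw [heq]
  refine (norm_mul_le _ _).trans (add_le_add norm_mk_le ?_)
  rw [norm_inv_eq]
  exact norm_mk_le

/-- A path of jumps of length at most `D` between two points at distance at most `2 * D` in a free
group passes through an intermediate point at distance at most `2 * D` from both of them. -/
theorem exists_intermediate {x : ℕ → FreeGroup X} {D a b : ℕ} (hab : a + 1 < b)
    (hstep : ∀ i, a ≤ i → i < b → ((x i)⁻¹ * x (i + 1)).norm ≤ D)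
    (hdist : ((x a)⁻¹ * x b).norm ≤ 2 * D) :
    ∃ m, a < m ∧ m < b ∧ ((x a)⁻¹ * x m).norm ≤ 2 * D ∧ ((x m)⁻¹ * x b).norm ≤ 2 * D := by
  have hlast : a < b - 1 ∧ ((x (b - 1))⁻¹ * x b).norm ≤ 2 * D := by
    refine ⟨by omega, ?_⟩
    have := hstep (b - 1) (by omega) (by omega)
    rw [Nat.sub_add_cancel (by omega)] at this
    omega
  have hex : ∃ m, a < m ∧ ((x m)⁻¹ * x b).norm ≤ 2 * D := ⟨_, hlast⟩
  classical
  obtain ⟨m, ⟨ham, hmb⟩, hmin⟩ : ∃ m, (a < m ∧ ((x m)⁻¹ * x b).norm ≤ 2 * D) ∧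
      ∀ i, a < i → i < m → 2 * D < ((x i)⁻¹ * x b).norm :=
    ⟨Nat.find hex, Nat.find_spec hex, fun i hai him => by
      have := Nat.find_min hex him
      simpa [hai] using this⟩
  have hmlt : m < b := by
    by_contra hle
    have := hmin (b - 1) hlast.1 (by omega)
    omega
  refine ⟨m, ham, hmlt, ?_, hmb⟩
  obtain rfl | ham' := Nat.eq_or_lt_of_le (Nat.succ_le_of_lt ham)
  · have := hstep a le_rfl (by omega)
    exact this.trans (by omega)
  set y : ℕ → FreeGroup X := fun i => (x i)⁻¹ * x b with hy
  have hstep' (i : ℕ) (hai : a ≤ i) (him : i < m) : (y i * (y (i + 1))⁻¹).norm ≤ D := by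
    have heq : y i * (y (i + 1))⁻¹ = (x i)⁻¹ * x (i + 1) := by
      simp only [hy]
      group
    exact heq ▸ hstep i hai (by omega)
  have hsuffix (i : ℕ) (hai : a ≤ i) (him : i < m) : ∃ u v p, (y i).toWord = u ++ p ∧
      (y (i + 1)).toWord = v ++ p ∧ D ≤ p.length := by
    obtain ⟨u, v, p, hu, hv, hle⟩ := exists_common_suffix (y i) (y (i + 1))
    refine ⟨u, v, p, hu, hv, ?_⟩
    have := hstep' i hai him
    have hnu : (y i).norm = u.length + p.length := by rw [norm, hu, List.length_append]
    have hnv : (y (i + 1)).norm = v.length + p.length := by rw [norm, hv, List.length_append]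
    obtain rfl | hai' := Nat.eq_or_lt_of_le hai
    · have : 2 * D < (y (a + 1)).norm := hmin (a + 1) (by omega) ham'
      omega
    · have : 2 * D < (y i).norm := hmin i hai' him
      omega
  obtain ⟨p, hp, hpa⟩ : ∃ p, p.length = D ∧ p <:+ (y a).toWord := by
    obtain ⟨u, v, p, hu, -, hle⟩ := hsuffix a le_rfl ham
    exact ⟨p.drop (p.length - D), by rw [List.length_drop]; omega,
      (List.drop_suffix _ _).trans (hu ▸ List.suffix_append u p)⟩
  have hpi (i : ℕ) (hai : a ≤ i) : i ≤ m → p <:+ (y i).toWord := by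
    induction i, hai using Nat.le_induction with
    | base => exact fun _ => hpa
    | succ i hai ih =>
      intro him
      obtain ⟨u, v, q, hu, hv, hle⟩ := hsuffix i hai him
      have hpq : p <:+ q := List.suffix_of_suffix_length_le (ih (by omega))
        (hu ▸ List.suffix_append u q) (hp ▸ hle)
      exact hpq.trans (hv ▸ List.suffix_append v q)
  obtain ⟨u, hu⟩ := hpa
  obtain ⟨v, hv⟩ := hpi m ham.le le_rfl
  have hnu : (y a).norm = u.length + p.length := by rw [norm, ← hu, List.length_append]
  have hnv : (y m).norm = v.length + p.length := by rw [norm, ← hv, List.length_append]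
  have hya : (y a).norm ≤ 2 * D := hdist
  have hym : (y m).norm ≤ 2 * D := hmb
  have heq : (x a)⁻¹ * x m = y a * (y m)⁻¹ := by
    simp only [hy]
    group
  rw [heq]
  exact (norm_mul_inv_le_of_common_suffix hu.symm hv.symm).trans (by omega)

theorem finite_norm_le [Finite X] (K : ℕ) : {g : FreeGroup X | g.norm ≤ K}.Finite :=
  Set.Finite.preimage toWord_injective.injOn (List.finite_length_le (X × Bool) K)

end FreeGroup

/-! ### Automata over virtually free groups recognize context-free languages -/

namespace GAutomaton

variable {α : Type} {G : Type} [Group G]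

theorem StepsIn.exists_path {M : GAutomaton α G} {n : ℕ} {c d : M.Q × G × List α}
    (h : M.StepsIn n c d) : ∃ f : ℕ → M.Q × G × List α, f 0 = c ∧ f n = d ∧
      ∀ i < n, M.Step (f i) (f (i + 1)) := by
  induction n generalizing c with
  | zero => exact ⟨fun _ => c, rfl, h, by simp⟩
  | succ n ih =>
    obtain ⟨c', hc, h⟩ := h
    obtain ⟨f, h0, hn, hf⟩ := ih h
    refine ⟨fun i => i.casesOn c f, rfl, hn, ?_⟩
    rintro (_ | i) hi
    · change M.Step c (f 0)
      rwa [h0]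
    · exact hf i (by omega)

/-- The rules of the grammar whose nonterminals `(p, b, q)` stand for the computations from `p` to
`q` that multiply the register by `b`, where `b` is allowed to be composed of elements of `B`. -/
def triangleRules (M : GAutomaton α G) (B : Set G) :
    Set (ContextFreeRule α (Option (M.Q × G × M.Q))) :=
  (fun q => ⟨none, [.nonterminal (some (M.q0, 1, q))]⟩) '' M.acc ∪
  Set.range (fun p => ⟨some (p, 1, p), []⟩) ∪
  (fun t => ⟨some (t.1, t.2.2.2, t.2.2.1), t.2.1.toList.map .terminal⟩) '' M.δ ∪
  (fun t : (M.Q × M.Q × M.Q) × G × G => ⟨some (t.1.1, t.2.1 * t.2.2, t.1.2.2),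
    [.nonterminal (some (t.1.1, t.2.1, t.1.2.1)), .nonterminal (some (t.1.2.1, t.2.2, t.1.2.2))]⟩) ''
      (Set.univ ×ˢ B ×ˢ B)

theorem finite_triangleRules (M : GAutomaton α G) {B : Set G} (hB : B.Finite) :
    (M.triangleRules B).Finite := by
  have := M.finQ
  exact ((((Set.toFinite _).image _).union (Set.finite_range _)).union (M.finδ.image _)).union
    ((Set.finite_univ.prod (hB.prod hB)).image _)

/-- The grammar with rules `triangleRules`. -/
noncomputable def triangleGrammar (M : GAutomaton α G) {B : Set G} (hB : B.Finite) :
    ContextFreeGrammar α where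
  NT := Option (M.Q × G × M.Q)
  initial := none
  rules := (M.finite_triangleRules hB).toFinset

/-- The words read by the computations from `p` to `q` that multiply the register by `b`. -/
def pathLang (M : GAutomaton α G) (p : M.Q) (b : G) (q : M.Q) : Language α :=
  {w | ∃ k, M.StepsIn k (p, 1, w) (q, b, [])}

theorem pathLang_mul_le (M : GAutomaton α G) (p q r : M.Q) (b c : G) :
    M.pathLang p b q * M.pathLang q c r ≤ M.pathLang p (b * c) r := by
  intro w hw
  obtain ⟨u, ⟨k, hk⟩, v, ⟨l, hl⟩, rfl⟩ := Language.mem_mul.1 hw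
  have h₁ := hk.frame 1 v
  have h₂ := hl.frame b []
  simp only [one_mul, mul_one, List.nil_append, List.append_nil] at h₁ h₂
  exact ⟨k + l, h₁.trans h₂⟩

/-- The intended interpretation of the nonterminals of `triangleGrammar`. -/
def triangleVal (M : GAutomaton α G) : Option (M.Q × G × M.Q) → Language α
  | none => M.lang
  | some (p, b, q) => M.pathLang p b q

open ContextFreeGrammar in
theorem formLang_triangleVal_le (M : GAutomaton α G) {B : Set G}
    {r : ContextFreeRule α (Option (M.Q × G × M.Q))} (hr : r ∈ M.triangleRules B) :
    formLang M.triangleVal r.output ≤ M.triangleVal r.input := by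
  rcases hr with ((⟨q, hq, rfl⟩ | ⟨p, rfl⟩) | ⟨⟨p, σ, q, m⟩, ht, rfl⟩) |
    ⟨⟨⟨p, q, r⟩, b, c⟩, -, rfl⟩
  · rintro w hw
    replace hw : w ∈ formLang M.triangleVal [.nonterminal (some (M.q0, 1, q))] := hw
    obtain ⟨k, hk⟩ : w ∈ M.pathLang M.q0 1 q := by
      simpa [formLang, symbolLang, triangleVal] using hw
    exact ⟨k, k, le_rfl, q, hq, hk⟩
  · intro w hw
    obtain rfl := mem_formLang_nil.1 hw
    exact ⟨0, rfl⟩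
  · intro w hw
    refine ⟨1, .single ⟨σ, m, ht, (one_mul m).symm, ?_⟩⟩
    cases σ with
    | none => exact (mem_formLang_nil.1 hw).symm
    | some a =>
      obtain ⟨_, rfl, _, rfl, rfl⟩ := mem_formLang_cons.1 hw
      rfl
  · simpa [formLang, symbolLang, triangleVal] using M.pathLang_mul_le p q r b c

theorem mem_lang_of_mem_triangleGrammar (M : GAutomaton α G) {B : Set G} (hB : B.Finite)
    {w : List α} (hw : w ∈ (M.triangleGrammar hB).language) : w ∈ M.lang :=
  ContextFreeGrammar.mem_val_of_derives (g := M.triangleGrammar hB) (val := M.triangleVal)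
    (fun _ hr => M.formLang_triangleVal_le ((Set.Finite.mem_toFinset _).1 hr)) hw

theorem derives_of_mem_triangleRules (M : GAutomaton α G) {B : Set G} (hB : B.Finite)
    {r : ContextFreeRule α (Option (M.Q × G × M.Q))} (hr : r ∈ M.triangleRules B) :
    (M.triangleGrammar hB).Derives [.nonterminal r.input] r.output :=
  ContextFreeGrammar.derives_of_mem_rules (g := M.triangleGrammar hB)
    ((Set.Finite.mem_toFinset _).2 hr)

/-- A path along which every long interval splits into two intervals that multiply the register
by elements of `B` is parsed by the grammar. `C` tells which intervals are considered. -/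
theorem exists_derives_of_path (M : GAutomaton α G) {B : Set G} (hB : B.Finite)
    {f : ℕ → M.Q × G × List α} {n : ℕ} (hf : ∀ i < n, M.Step (f i) (f (i + 1)))
    {C : ℕ → ℕ → Prop} (hCB : ∀ i j, C i j → (f i).2.1⁻¹ * (f j).2.1 ∈ B)
    (hC : ∀ i j, i + 1 < j → j ≤ n → C i j → ∃ m, i < m ∧ m < j ∧ C i m ∧ C m j)
    {i j : ℕ} (hij : i < j) (hj : j ≤ n) (hCij : C i j) :
    ∃ u, (f i).2.2 = u ++ (f j).2.2 ∧ (M.triangleGrammar hB).Derives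
      [.nonterminal (some ((f i).1, (f i).2.1⁻¹ * (f j).2.1, (f j).1))]
      (u.map .terminal) := by
  obtain ⟨d, hd⟩ : ∃ d, d = j - i := ⟨_, rfl⟩
  induction d using Nat.strong_induction_on generalizing i j with
  | _ d ih =>
    obtain rfl | hlt := Nat.eq_or_lt_of_le (Nat.succ_le_of_lt hij)
    · obtain ⟨σ, m, hδ, hm, hσ⟩ := hf i hj
      refine ⟨σ.toList, by cases σ <;> simp_all, ?_⟩
      have hm' : (f i).2.1⁻¹ * (f (i + 1)).2.1 = m := by rw [hm, inv_mul_cancel_left]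
      rw [Nat.succ_eq_add_one, hm']
      exact M.derives_of_mem_triangleRules hB (.inl (.inr ⟨_, hδ, rfl⟩))
    · obtain ⟨m, him, hmj, hCim, hCmj⟩ := hC i j hlt hj hCij
      obtain ⟨u, hu, hdu⟩ := ih (m - i) (by omega) him (by omega) hCim rfl
      obtain ⟨v, hv, hdv⟩ := ih (j - m) (by omega) hmj hj hCmj rfl
      refine ⟨u ++ v, by rw [hu, hv, List.append_assoc], ?_⟩
      have hmul : (f i).2.1⁻¹ * (f j).2.1 =
          ((f i).2.1⁻¹ * (f m).2.1) * ((f m).2.1⁻¹ * (f j).2.1) := by group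
      have hrule := M.derives_of_mem_triangleRules hB (.inr ⟨(((f i).1, (f m).1, (f j).1),
        (f i).2.1⁻¹ * (f m).2.1, (f m).2.1⁻¹ * (f j).2.1),
        ⟨Set.mem_univ _, hCB i m hCim, hCB m j hCmj⟩, rfl⟩)
      rw [hmul, List.map_append]
      exact hrule.trans (ContextFreeGrammar.Derives.append hdu hdv)

/-- Automata over finitely generated virtually free groups recognize context-free languages. -/
theorem isContextFree_lang_of_virtually_free (M : GAutomaton α G) {X : Type*} [Finite X]
    (φ : FreeGroup X →* G) (hφ : Function.Injective φ) {R : Set G} (hR : R.Finite)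
    (hφR : ∀ g, ∃ h, ∃ r ∈ R, g = φ h * r) : M.lang.IsContextFree := by
  classical
  choose π ρ hρ hπρ using hφR
  have hdiff (g h : G) : g⁻¹ * h = (ρ g)⁻¹ * φ ((π g)⁻¹ * π h) * ρ h := by
    conv_lhs => rw [hπρ g, hπρ h]
    simp only [map_mul, map_inv]
    group
  obtain ⟨D, hD⟩ : ∃ D, ∀ t ∈ M.δ, ∀ g : G, ((π g)⁻¹ * π (g * t.2.2.2)).norm ≤ D := by
    have hfin : (φ ⁻¹' ((fun z : G × (M.Q × Option α × M.Q × G) × G =>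
        z.1 * z.2.1.2.2.2 * z.2.2⁻¹) '' (R ×ˢ M.δ ×ˢ R))).Finite :=
      ((hR.prod (M.finδ.prod hR)).image _).preimage hφ.injOn
    obtain ⟨D, hD⟩ := (hfin.image FreeGroup.norm).bddAbove
    refine ⟨D, fun t ht g => hD ⟨_, ⟨(ρ g, t, ρ (g * t.2.2.2)), ⟨hρ _, ht, hρ _⟩, ?_⟩, rfl⟩⟩
    have := hdiff g (g * t.2.2.2)
    rw [inv_mul_cancel_left] at this
    rw [mul_inv_eq_iff_eq_mul, ← eq_inv_mul_iff_mul_eq, ← mul_assoc]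
    exact this
  let B : Set G := (fun z : G × FreeGroup X × G => z.1⁻¹ * φ z.2.1 * z.2.2) ''
    (R ×ˢ {h | h.norm ≤ 2 * D} ×ˢ R)
  have hB : B.Finite := (hR.prod ((FreeGroup.finite_norm_le _).prod hR)).image _
  refine ⟨M.triangleGrammar hB, Set.Subset.antisymm
    (fun w hw => M.mem_lang_of_mem_triangleGrammar hB hw) ?_⟩
  rintro w ⟨-, n, -, q, hq, h⟩
  obtain ⟨f, h0, hn, hf⟩ := h.exists_path
  have hinit := M.derives_of_mem_triangleRules hB (.inl (.inl (.inl ⟨q, hq, rfl⟩)))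
  refine hinit.trans ?_
  obtain rfl | hpos := Nat.eq_zero_or_pos n
  · obtain ⟨rfl, -, rfl⟩ : M.q0 = q ∧ (1 : G) = 1 ∧ w = [] := by simpa [h0] using hn
    exact M.derives_of_mem_triangleRules hB (.inl (.inl (.inr ⟨M.q0, rfl⟩)))
  · obtain ⟨u, hu, hder⟩ := M.exists_derives_of_path hB hf
      (C := fun i j => ((π (f i).2.1)⁻¹ * π (f j).2.1).norm ≤ 2 * D)
      (fun i j hij => ⟨(ρ (f i).2.1, _, ρ (f j).2.1), ⟨hρ _, hij, hρ _⟩, (hdiff _ _).symm⟩)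
      (fun i j hij hj hC => FreeGroup.exists_intermediate (x := fun i => π (f i).2.1) hij
        (fun l _ hl => by
          obtain ⟨σ, m, hδ, hm, -⟩ := hf l (by omega)
          simp only [hm]
          exact hD _ hδ _) hC)
      hpos le_rfl (by simp [h0, hn])
    simp only [h0, hn, List.append_nil, inv_one, mul_one] at hu hder
    rw [hu]
    exact hder

end GAutomaton

/-! ### A free subgroup of finite index in `GL(2, ℤ)` -/

section Sanov

open Matrix Matrix.SpecialLinearGroup

/-- The matrices `[[1, 2], [0, 1]]` and `[[1, 0], [2, 1]]`. -/
def sanovGenerator : Fin 2 → SpecialLinearGroup (Fin 2) ℤ :=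
  ![⟨!![1, 2; 0, 1], by simp⟩, ⟨!![1, 0; 2, 1], by simp⟩]

/-- The homomorphism from the free group of rank two onto the Sanov subgroup. -/
def sanovHom : FreeGroup (Fin 2) →* SpecialLinearGroup (Fin 2) ℤ :=
  FreeGroup.lift sanovGenerator

theorem coe_sanovGenerator_zero :
    (sanovGenerator 0 : Matrix (Fin 2) (Fin 2) ℤ) = !![1, 2; 0, 1] := rfl

theorem coe_sanovGenerator_one :
    (sanovGenerator 1 : Matrix (Fin 2) (Fin 2) ℤ) = !![1, 0; 2, 1] := rfl

theorem coe_sanovGenerator_zero_mul (g : SpecialLinearGroup (Fin 2) ℤ) :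
    (↑(sanovGenerator 0 * g) : Matrix (Fin 2) (Fin 2) ℤ) =
      !![g 0 0 + 2 * g 1 0, g 0 1 + 2 * g 1 1; g 1 0, g 1 1] := by
  rw [coe_mul, coe_sanovGenerator_zero]
  ext i j
  fin_cases i <;> fin_cases j <;> simp [Matrix.mul_apply, Fin.sum_univ_two]

theorem coe_sanovGenerator_zero_inv_mul (g : SpecialLinearGroup (Fin 2) ℤ) :
    (↑((sanovGenerator 0)⁻¹ * g) : Matrix (Fin 2) (Fin 2) ℤ) =
      !![g 0 0 - 2 * g 1 0, g 0 1 - 2 * g 1 1; g 1 0, g 1 1] := by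
  rw [coe_mul, coe_inv, coe_sanovGenerator_zero, adjugate_fin_two_of]
  ext i j
  fin_cases i <;> fin_cases j <;> simp [Matrix.mul_apply, Fin.sum_univ_two] <;> ring

theorem coe_sanovGenerator_one_mul (g : SpecialLinearGroup (Fin 2) ℤ) :
    (↑(sanovGenerator 1 * g) : Matrix (Fin 2) (Fin 2) ℤ) =
      !![g 0 0, g 0 1; g 1 0 + 2 * g 0 0, g 1 1 + 2 * g 0 1] := by
  rw [coe_mul, coe_sanovGenerator_one]
  ext i j
  fin_cases i <;> fin_cases j <;> simp [Matrix.mul_apply, Fin.sum_univ_two] <;> ring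

theorem coe_sanovGenerator_one_inv_mul (g : SpecialLinearGroup (Fin 2) ℤ) :
    (↑((sanovGenerator 1)⁻¹ * g) : Matrix (Fin 2) (Fin 2) ℤ) =
      !![g 0 0, g 0 1; g 1 0 - 2 * g 0 0, g 1 1 - 2 * g 0 1] := by
  rw [coe_mul, coe_inv, coe_sanovGenerator_one, adjugate_fin_two_of]
  ext i j
  fin_cases i <;> fin_cases j <;> simp [Matrix.mul_apply, Fin.sum_univ_two] <;> ring

theorem injective_sanovHom : Function.Injective sanovHom := by
  have hcol (g : SpecialLinearGroup (Fin 2) ℤ) : 0 < g 0 0 * g 0 0 + g 1 0 * g 1 0 := by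
    have hdet := g.det_coe
    rw [det_fin_two] at hdet
    have h₀ := mul_self_nonneg (g 0 0)
    have h₁ := mul_self_nonneg (g 1 0)
    by_contra! hle
    have h₀' : g 0 0 = 0 := mul_self_eq_zero.1 (by linarith)
    have h₁' : g 1 0 = 0 := mul_self_eq_zero.1 (by linarith)
    rw [h₀', h₁'] at hdet
    simp at hdet
  refine FreeGroup.injective_lift_of_ping_pong (α := SpecialLinearGroup (Fin 2) ℤ)
    sanovGenerator
    ![{g | g 1 0 * g 1 0 ≤ g 0 0 * g 1 0},
      {g | 0 ≤ g 0 0 * g 1 0 ∧ g 0 0 * g 1 0 < g 1 0 * g 1 0}]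
    ![{g | g 0 0 * g 1 0 < -(g 1 0 * g 1 0)},
      {g | -(g 1 0 * g 1 0) ≤ g 0 0 * g 1 0 ∧ g 0 0 * g 1 0 < 0}]
    ?_ ?_ ?_ ?_ ?_ ?_
  · rw [Fin.forall_fin_two]
    refine ⟨⟨1, ?_⟩, ⟨sanovGenerator 1, ?_⟩⟩
    · simp
    · change 0 ≤ (1 : ℤ) * 2 ∧ (1 : ℤ) * 2 < 2 * 2
      norm_num
  · intro i j hij
    rw [Function.onFun, Set.disjoint_left]
    intro g
    fin_cases i <;> fin_cases j <;> simp at hij ⊢ <;> intros <;> linarith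
  · intro i j hij
    rw [Function.onFun, Set.disjoint_left]
    intro g
    fin_cases i <;> fin_cases j <;> simp at hij ⊢ <;> intros <;> linarith
  · intro i j
    rw [Set.disjoint_left]
    intro g
    have := mul_self_nonneg (g 1 0)
    fin_cases i <;> fin_cases j <;> simp <;> intros <;> linarith
  · rw [Fin.forall_fin_two]
    constructor
    · rintro _ ⟨g, hg, rfl⟩
      have hg : -(g 1 0 * g 1 0) ≤ g 0 0 * g 1 0 := not_lt.1 hg
      change (sanovGenerator 0 * g) 1 0 * (sanovGenerator 0 * g) 1 0 ≤
        (sanovGenerator 0 * g) 0 0 * (sanovGenerator 0 * g) 1 0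
      rw [coe_sanovGenerator_zero_mul]
      change g 1 0 * g 1 0 ≤ (g 0 0 + 2 * g 1 0) * g 1 0
      linarith
    · rintro _ ⟨g, hg, rfl⟩
      have hg : ¬(-(g 1 0 * g 1 0) ≤ g 0 0 * g 1 0 ∧ g 0 0 * g 1 0 < 0) := hg
      change 0 ≤ (sanovGenerator 1 * g) 0 0 * (sanovGenerator 1 * g) 1 0 ∧
        (sanovGenerator 1 * g) 0 0 * (sanovGenerator 1 * g) 1 0 <
          (sanovGenerator 1 * g) 1 0 * (sanovGenerator 1 * g) 1 0
      rw [coe_sanovGenerator_one_mul]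
      change 0 ≤ g 0 0 * (g 1 0 + 2 * g 0 0) ∧
        g 0 0 * (g 1 0 + 2 * g 0 0) < (g 1 0 + 2 * g 0 0) * (g 1 0 + 2 * g 0 0)
      have := hcol g
      rcases le_or_gt 0 (g 0 0 * g 1 0) with h | h
      · constructor <;> nlinarith
      · have : g 0 0 * g 1 0 < -(g 1 0 * g 1 0) := by grind
        constructor <;> nlinarith [mul_self_nonneg (g 0 0 + g 1 0), mul_self_nonneg (g 1 0)]
  · rw [Fin.forall_fin_two]
    constructor
    · rintro _ ⟨g, hg, rfl⟩
      have hg : g 0 0 * g 1 0 < g 1 0 * g 1 0 := not_le.1 hg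
      change ((sanovGenerator 0)⁻¹ * g) 0 0 * ((sanovGenerator 0)⁻¹ * g) 1 0 <
        -(((sanovGenerator 0)⁻¹ * g) 1 0 * ((sanovGenerator 0)⁻¹ * g) 1 0)
      rw [coe_sanovGenerator_zero_inv_mul]
      change (g 0 0 - 2 * g 1 0) * g 1 0 < -(g 1 0 * g 1 0)
      linarith
    · rintro _ ⟨g, hg, rfl⟩
      have hg : ¬(0 ≤ g 0 0 * g 1 0 ∧ g 0 0 * g 1 0 < g 1 0 * g 1 0) := hg
      change -(((sanovGenerator 1)⁻¹ * g) 1 0 * ((sanovGenerator 1)⁻¹ * g) 1 0) ≤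
          ((sanovGenerator 1)⁻¹ * g) 0 0 * ((sanovGenerator 1)⁻¹ * g) 1 0 ∧
        ((sanovGenerator 1)⁻¹ * g) 0 0 * ((sanovGenerator 1)⁻¹ * g) 1 0 < 0
      rw [coe_sanovGenerator_one_inv_mul]
      change -((g 1 0 - 2 * g 0 0) * (g 1 0 - 2 * g 0 0)) ≤ g 0 0 * (g 1 0 - 2 * g 0 0) ∧
        g 0 0 * (g 1 0 - 2 * g 0 0) < 0
      have := hcol g
      rcases lt_or_ge (g 0 0 * g 1 0) 0 with h | h
      · constructor <;> nlinarith
      · have : g 1 0 * g 1 0 ≤ g 0 0 * g 1 0 := by grind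
        constructor <;> nlinarith [mul_self_nonneg (g 0 0 - g 1 0), mul_self_nonneg (g 1 0)]

/-- The Sanov subgroup and its negative exhaust the matrices with even off-diagonal entries. -/
theorem exists_eq_sanovHom_or_neg (g : SpecialLinearGroup (Fin 2) ℤ) (h₁₀ : Even (g 1 0))
    (h₀₁ : Even (g 0 1)) : ∃ h, g = sanovHom h ∨ g = -sanovHom h := by
  have hstep (a g : SpecialLinearGroup (Fin 2) ℤ) (ha : a ∈ sanovHom.range)
      (hg : ∃ h, a * g = sanovHom h ∨ a * g = -sanovHom h) :
      ∃ h, g = sanovHom h ∨ g = -sanovHom h := by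
    obtain ⟨k, rfl⟩ := ha
    obtain ⟨h, hg⟩ := hg
    refine ⟨k⁻¹ * h, ?_⟩
    rwa [map_mul, map_inv, ← mul_neg, eq_inv_mul_iff_mul_eq, eq_inv_mul_iff_mul_eq]
  have hgen (i : Fin 2) : sanovGenerator i ∈ sanovHom.range := ⟨.of i, by simp [sanovHom]⟩
  have hdet (g : SpecialLinearGroup (Fin 2) ℤ) : g 0 0 * g 1 1 - g 0 1 * g 1 0 = 1 := by
    rw [← det_fin_two, g.det_coe]
  obtain ⟨n, hn⟩ : ∃ n, n = (g 0 0).natAbs + (g 1 0).natAbs := ⟨_, rfl⟩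
  induction n using Nat.strong_induction_on generalizing g with
  | _ n ih =>
    have hodd : Odd (g 0 0) := by
      have := hdet g
      by_contra h
      obtain ⟨x, hx⟩ := Int.not_odd_iff_even.1 h
      obtain ⟨y, hy⟩ := h₁₀
      rw [hx, hy] at this
      have : 2 * (x * g 1 1 - g 0 1 * y) = 1 := by linarith
      omega
    obtain ⟨x, hx⟩ := hodd
    obtain ⟨y, hy⟩ := id h₁₀
    obtain ⟨z, hz⟩ := id h₀₁
    by_cases hc : g 1 0 = 0
    · have had : g 0 0 * g 1 1 = 1 := by simpa [hc] using hdet g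
      have hzpow (k : ℤ) :
          (↑(sanovGenerator 0 ^ k) : Matrix (Fin 2) (Fin 2) ℤ) = !![1, 2 * k; 0, 1] := by
        have : sanovGenerator 0 = ModularGroup.T ^ (2 : ℤ) := by
          ext1
          rw [ModularGroup.coe_T_zpow, coe_sanovGenerator_zero]
        rw [this, ← _root_.zpow_mul, ModularGroup.coe_T_zpow]
      rcases Int.eq_one_or_neg_one_of_mul_eq_one' had with ⟨h₀, h₁⟩ | ⟨h₀, h₁⟩
      · refine ⟨.of 0 ^ z, .inl ?_⟩
        ext i j
        rw [map_zpow, sanovHom, FreeGroup.lift_apply_of, hzpow]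
        fin_cases i <;> fin_cases j <;> simp [h₀, h₁, hc, hz, two_mul]
      · refine ⟨.of 0 ^ (-z), .inr ?_⟩
        ext i j
        rw [map_zpow, sanovHom, FreeGroup.lift_apply_of, coe_neg, hzpow]
        fin_cases i <;> fin_cases j <;> simp [h₀, h₁, hc, hz, two_mul]
    rcases lt_or_ge (g 1 0).natAbs (g 0 0).natAbs with hlt | hle
    · by_cases hs : 0 < g 0 0 ↔ 0 < g 1 0
      · refine hstep _ g (inv_mem (hgen 0)) (ih _ ?_ _ ?_ ?_ rfl) <;>
          rw [coe_sanovGenerator_zero_inv_mul] <;> simp <;> grind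
      · refine hstep _ g (hgen 0) (ih _ ?_ _ ?_ ?_ rfl) <;>
          rw [coe_sanovGenerator_zero_mul] <;> simp <;> grind
    · by_cases hs : 0 < g 0 0 ↔ 0 < g 1 0
      · refine hstep _ g (inv_mem (hgen 1)) (ih _ ?_ _ ?_ ?_ rfl) <;>
          rw [coe_sanovGenerator_one_inv_mul] <;> simp <;> grind
      · refine hstep _ g (hgen 1) (ih _ ?_ _ ?_ ?_ rfl) <;>
          rw [coe_sanovGenerator_one_mul] <;> simp <;> grind

theorem exists_eq_toGL_sanovHom_mul : ∃ R : Set (GL (Fin 2) ℤ), R.Finite ∧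
    ∀ g, ∃ h, ∃ r ∈ R, g = (toGL.comp sanovHom) h * r := by
  let Ψ : GL (Fin 2) ℤ →* GL (Fin 2) (ZMod 2) × ℤˣ :=
    (GeneralLinearGroup.map (Int.castRingHom (ZMod 2))).prod GeneralLinearGroup.det
  let s : GL (Fin 2) (ZMod 2) × ℤˣ → GL (Fin 2) ℤ := Function.invFun Ψ
  refine ⟨Set.range s ∪ Set.range (-s), (Set.finite_range _).union (Set.finite_range _),
    fun g => ?_⟩
  have hs : Ψ (g * (s (Ψ g))⁻¹) = 1 := by
    rw [map_mul, map_inv, Function.invFun_eq (f := Ψ) ⟨g, rfl⟩, mul_inv_cancel]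
  set r := s (Ψ g) with hr
  obtain ⟨k, hk⟩ : ∃ k : SpecialLinearGroup (Fin 2) ℤ, toGL k = g * r⁻¹ :=
    ⟨⟨↑(g * r⁻¹), congrArg (fun z => (z.2 : ℤ)) hs⟩, Units.ext rfl⟩
  have heven (i j : Fin 2) (hij : i ≠ j) : Even (k i j) := by
    refine even_iff_two_dvd.2 ((ZMod.intCast_zmod_eq_zero_iff_dvd _ 2).1 ?_)
    have := congrArg (fun z => z.1 i j) hs
    rw [← hk] at this
    simpa [Ψ, hij] using this
  have hg : g = toGL k * r := by rw [hk, inv_mul_cancel_right]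
  obtain ⟨h, rfl | rfl⟩ := exists_eq_sanovHom_or_neg k (heven 1 0 (by simp)) (heven 0 1 (by simp))
  · exact ⟨h, r, .inl ⟨_, rfl⟩, hg⟩
  · refine ⟨h, -r, .inr ⟨_, rfl⟩, ?_⟩
    rw [hg, MonoidHom.comp_apply, mul_neg, ← neg_mul]
    congr 1
    ext
    simp

end Sanov

/-- `CF = 𝔏(F₂)ʷ_{O(n)} = 𝔏(SL(2,ℤ))ʷ_{O(n)} = 𝔏(GL(2,ℤ))ʷ_{O(n)}`. -/
theorem cf_eq_lintime_F2_SL2Z_GL2Z {α : Type} [Fintype α] (L : Language α) :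
    (L.IsContextFree ↔ GRecognizableLinTime (FreeGroup (Fin 2)) L) ∧
    (GRecognizableLinTime (FreeGroup (Fin 2)) L ↔
      GRecognizableLinTime (Matrix.SpecialLinearGroup (Fin 2) ℤ) L) ∧
    (GRecognizableLinTime (Matrix.SpecialLinearGroup (Fin 2) ℤ) L ↔
      GRecognizableLinTime (GL (Fin 2) ℤ) L) := by
  have hF : L.IsContextFree → GRecognizableLinTime (FreeGroup (Fin 2)) L :=
    Language.IsContextFree.gRecognizableLinTime
  have hSL : GRecognizableLinTime (FreeGroup (Fin 2)) L →
      GRecognizableLinTime (Matrix.SpecialLinearGroup (Fin 2) ℤ) L :=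
    .of_injective sanovHom injective_sanovHom
  have hGL : GRecognizableLinTime (Matrix.SpecialLinearGroup (Fin 2) ℤ) L →
      GRecognizableLinTime (GL (Fin 2) ℤ) L :=
    .of_injective Matrix.SpecialLinearGroup.toGL Matrix.SpecialLinearGroup.toGL_injective
  have hCF : GRecognizableLinTime (GL (Fin 2) ℤ) L → L.IsContextFree := by
    intro h
    obtain ⟨M, rfl⟩ := h.recognizable
    obtain ⟨R, hR, hgen⟩ := exists_eq_toGL_sanovHom_mul
    exact M.isContextFree_lang_of_virtually_free _
      (Matrix.SpecialLinearGroup.toGL_injective.comp injective_sanovHom) hR hgen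
  tauto
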